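/- Let A₁ = 1/(1 − γρ₁) and A₀ = γ·A₁·ρ₀/(1−γ). Suppose bounded functions W̄_R : Y × 𝔹 × 𝔹 → ℝ and W̄_A : Y → ℝ satisfy the reduced system: with W̄(y', B', b') = δ(y', B')·W̄_R(y', B', b') + (1 − δ(y', B'))·W̄_A(y'), for all (y, B, b): W̄_R(y, B, b) = max_{b'} { G(b, b'; Γ(y,B), y) − θγ·log Σ_{y'} P(y,y')·exp( −[ T_{η(1−γρ₁)}[ε](y', y)/(1−γρ₁) + W̄(y', Γ(y,B), b') ]/θ ) } and W̄_A(y) = −θγ·log Σ_{y'} P(y,y')·exp( −[ T_{η(1−γρ₁)}[ε](y', y)/(1−γρ₁) + (1−π)·W̄_A(y') + π·W̄(y', 0, 0) ]/θ ). Then the functions W_R(y, z, B, b) = A₀ + A₁·z + W̄_R(y, B, b) and W_A(y, z) = A₀ + A₁·z + W̄_A(y), with W(y', z', B', b') = δ(y', B')·W_R(y', z', B', b') + (1 − δ(y', B'))·W_A(y', z'), satisfy the lender's Bellman system with stochastic endowment: for all (y, z, B, b), W_R(y, z, B, b) = max_{b'} { z + G(b, b'; Γ(y,B), y) − θγ·log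 Σ_{y'} P(y,y')·exp( −T_η[ x ↦ W(y', ρ₀ + ρ₁·z + x, Γ(y,B), b') ](y', y)/θ ) } and W_A(y, z) = z − θγ·log Σ_{y'} P(y,y')·exp( −T_η[ x ↦ (1−π)·W_A(y', ρ₀ + ρ₁·z + x) + π·W(y', ρ₀ + ρ₁·z + x, 0, 0) ](y', y)/θ ), with the same maximizers b' at each state. -/

import Mathlib

open Finset MeasureTheory

/-- Lender's trading payoff `G(b, b'; B', y) = q(y,B')·(b' − (1−λ)b) − (λ + (1−λ)ψ)·b`,
written as a function of the price `qv = q(y, B')` and the real bond positions. -/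
noncomputable def Gpay (qv lam ψ b b' : ℝ) : ℝ :=
  qv * (b' - (1 - lam) * b) - (lam + (1 - lam) * ψ) * b

/-- Entropic certainty equivalent `T_κ[ε] = −κ·log ∫ exp(−x/κ) dμ(x)` of the innovation
with law `μ`. -/
noncomputable def Teps (κ : ℝ) (μ : Measure ℝ) : ℝ :=
  -κ * Real.log (∫ x, Real.exp (-x / κ) ∂μ)

/-- Entropic operator `T_η[h] = −η·log ∫ exp(−h(x)/η) dμ(x)` applied to `h : ℝ → ℝ`. -/
noncomputable def Th (η : ℝ) (μ : Measure ℝ) (h : ℝ → ℝ) : ℝ :=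
  -η * Real.log (∫ x, Real.exp (-h x / η) ∂μ)

/-
The endowment component of the lender's value is the solution `V z = A₀ + A₁ * z` of
`V z = z + γ * V (ρ₀ + ρ₁ * z)`. Both entropic operators commute with adding constants, so in
`V (ρ₀ + ρ₁ * z + ε) = V (ρ₀ + ρ₁ * z) + ε / (1 - γ * ρ₁)` the first summand comes out of the nested
logarithms multiplied by `γ`. The second one stays inside, and rescaling the risk-aversion parameter
turns it into `T_{η(1 - γρ₁)}[ε] / (1 - γ * ρ₁)`. Hence the stochastic-endowment objective is the
reduced objective plus `V z`, and `V z` depends on neither the debt state nor the portfolio.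
-/

section EntropicOperator

variable {η s : ℝ} {μ : Measure ℝ}

theorem Th_const_add [NeZero μ] (hη : η ≠ 0) {h : ℝ → ℝ}
    (hint : Integrable (fun x => Real.exp (-h x / η)) μ) (c : ℝ) :
    Th η μ (fun x => c + h x) = c + Th η μ h := by
  have hexp (x : ℝ) : Real.exp (-(c + h x) / η) = Real.exp (-c / η) * Real.exp (-h x / η) := by
    rw [neg_add, add_div, Real.exp_add]
  simp only [Th, hexp]
  rw [integral_const_mul, Real.log_mul (Real.exp_ne_zero _) (integral_exp_pos hint).ne',
    Real.log_exp]
  field_simp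
  ring

theorem Th_div (hs : s ≠ 0) (h : ℝ → ℝ) :
    Th η μ (fun x => h x / s) = Th (η * s) μ h / s := by
  have hexp (x : ℝ) : -(h x / s) / η = -h x / (η * s) := by
    rw [← neg_div, div_div, mul_comm s]
  simp only [Th, hexp]
  field_simp

theorem Th_const_add_div [NeZero μ] (hη : η ≠ 0) (hs : s ≠ 0)
    (hint : Integrable (fun x => Real.exp (-x / (η * s))) μ) (c : ℝ) :
    Th η μ (fun x => c + x / s) = c + Teps (η * s) μ / s := by
  have hint' : Integrable (fun x => Real.exp (-(x / s) / η)) μ := by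
    simpa only [← neg_div, div_div, mul_comm s] using hint
  rw [Th_const_add hη hint']
  exact congrArg (c + ·) (Th_div hs fun x => x)

end EntropicOperator

section LogSumExp

variable {Y : Type*} [Fintype Y]

/-- Weighted log-sum-exp of `-v / θ`, the aggregator of next-period continuation values over
finitely many states in the Bellman equations. The weights `p` need not sum to one. -/
noncomputable def logSumExp (θ : ℝ) (p v : Y → ℝ) : ℝ :=
  Real.log (∑ y, p y * Real.exp (-v y / θ))

theorem sum_mul_exp_pos {p : Y → ℝ} (hp : 0 < p) (v : Y → ℝ) :
    0 < ∑ y, p y * Real.exp (v y) := by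
  obtain ⟨hp0, y, hy⟩ := Pi.lt_def.1 hp
  exact Fintype.sum_pos <| Pi.lt_def.2
    ⟨fun i => mul_nonneg (hp0 i) (Real.exp_nonneg _), y, mul_pos hy (Real.exp_pos _)⟩

theorem mul_logSumExp_const_add {θ : ℝ} (hθ : θ ≠ 0) {p : Y → ℝ} (hp : 0 < p) (k : ℝ)
    (v : Y → ℝ) :
    θ * logSumExp θ p (fun y => k + v y) = θ * logSumExp θ p v - k := by
  have hsum : ∑ y, p y * Real.exp (-(k + v y) / θ) =
      Real.exp (-k / θ) * ∑ y, p y * Real.exp (-v y / θ) := by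
    simp only [neg_add, add_div, Real.exp_add, Finset.mul_sum, mul_left_comm]
  rw [logSumExp, logSumExp, hsum,
    Real.log_mul (Real.exp_ne_zero _) (sum_mul_exp_pos hp _).ne', Real.log_exp]
  field_simp
  ring

end LogSumExp

section EndowmentValue

/-- The affine function `A₀ + A₁ * z`: the closed form of the `γ`-discounted value of the endowment
stream that starts at `z` and follows `z' = ρ₀ + ρ₁ * z` without innovations. -/
noncomputable def endowmentValue (γ ρ₀ ρ₁ z : ℝ) : ℝ :=
  γ * (1 / (1 - γ * ρ₁)) * ρ₀ / (1 - γ) + 1 / (1 - γ * ρ₁) * z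

variable {γ ρ₁ : ℝ}

theorem endowmentValue_eq_add_mul (hγ : γ ≠ 1) (hρ : γ * ρ₁ ≠ 1) (ρ₀ z : ℝ) :
    endowmentValue γ ρ₀ ρ₁ z = z + γ * endowmentValue γ ρ₀ ρ₁ (ρ₀ + ρ₁ * z) := by
  have hγ' : 1 - γ ≠ 0 := sub_ne_zero.2 hγ.symm
  have hρ' : 1 - γ * ρ₁ ≠ 0 := sub_ne_zero.2 hρ.symm
  unfold endowmentValue
  field_simp
  ring

theorem endowmentValue_add (γ ρ₀ ρ₁ z x : ℝ) :
    endowmentValue γ ρ₀ ρ₁ (z + x) = endowmentValue γ ρ₀ ρ₁ z + x / (1 - γ * ρ₁) := by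
  unfold endowmentValue
  ring

theorem Th_endowmentValue_add {η : ℝ} (hη : η ≠ 0) (hρ : γ * ρ₁ ≠ 1) {μ : Measure ℝ} [NeZero μ]
    (hint : Integrable (fun x => Real.exp (-x / (η * (1 - γ * ρ₁)))) μ) (ρ₀ z c : ℝ) :
    Th η μ (fun x => endowmentValue γ ρ₀ ρ₁ (z + x) + c) =
      endowmentValue γ ρ₀ ρ₁ z + (Teps (η * (1 - γ * ρ₁)) μ / (1 - γ * ρ₁) + c) := by
  simp only [endowmentValue_add, add_right_comm _ _ c]
  rw [Th_const_add_div hη (sub_ne_zero.2 hρ.symm) hint]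
  ring

theorem sub_logSumExp_Th_endowmentValue {Y : Type*} [Fintype Y] {p : Y → ℝ} (hp : 0 < p)
    {θ η : ℝ} (hθ : θ ≠ 0) (hη : η ≠ 0) (hγ : γ ≠ 1) (hρ : γ * ρ₁ ≠ 1)
    {ν : Y → Measure ℝ} [∀ y', NeZero (ν y')]
    (hν : ∀ y', Integrable (fun x => Real.exp (-x / (η * (1 - γ * ρ₁)))) (ν y'))
    (ρ₀ z : ℝ) (v : Y → ℝ) :
    z - θ * γ * logSumExp θ p (fun y' =>
        Th η (ν y') (fun x => endowmentValue γ ρ₀ ρ₁ (ρ₀ + ρ₁ * z + x) + v y')) =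
      endowmentValue γ ρ₀ ρ₁ z - θ * γ * logSumExp θ p (fun y' =>
        Teps (η * (1 - γ * ρ₁)) (ν y') / (1 - γ * ρ₁) + v y') := by
  simp only [fun y' => Th_endowmentValue_add hη hρ (hν y')]
  linear_combination -endowmentValue_eq_add_mul hγ hρ ρ₀ z -
    γ * mul_logSumExp_const_add hθ hp (endowmentValue γ ρ₀ ρ₁ (ρ₀ + ρ₁ * z)) fun y' =>
      Teps (η * (1 - γ * ρ₁)) (ν y') / (1 - γ * ρ₁) + v y'

end EndowmentValue

theorem stmt17_general {Y B : Type*} [Fintype Y] {P : Y → Y → ℝ} (hP : ∀ y, 0 < P y)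
    {γ θ η ρ₀ ρ₁ : ℝ} (hγ : γ ≠ 1) (hθ : θ ≠ 0) (hη : η ≠ 0) (hρ : γ * ρ₁ ≠ 1)
    {μ : Y → Y → Measure ℝ} [∀ y' y, NeZero (μ y' y)]
    (hμ : ∀ y' y, Integrable (fun x => Real.exp (-x / (η * (1 - γ * ρ₁)))) (μ y' y))
    (G : Y → B → B → B → ℝ) (zeroDebt : B) (Γ : Y → B → B) (δ : Y → B → ℝ) (π : ℝ)
    {WbarR : Y → B → B → ℝ} {WbarA : Y → ℝ} {Wbar : Y → B → B → ℝ}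
    (hWbar : ∀ y' B' b',
      Wbar y' B' b' = δ y' B' * WbarR y' B' b' + (1 - δ y' B') * WbarA y')
    (hbdd : ∀ y Bb b, BddAbove (Set.range fun b' =>
      G y (Γ y Bb) b b' - θ * γ * logSumExp θ (P y) (fun y' =>
        Teps (η * (1 - γ * ρ₁)) (μ y' y) / (1 - γ * ρ₁) + Wbar y' (Γ y Bb) b')))
    (hRbar : ∀ y Bb b, WbarR y Bb b = ⨆ b',
      (G y (Γ y Bb) b b' - θ * γ * logSumExp θ (P y) (fun y' =>
        Teps (η * (1 - γ * ρ₁)) (μ y' y) / (1 - γ * ρ₁) + Wbar y' (Γ y Bb) b')))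
    (hAbar : ∀ y, WbarA y = -(θ * γ) * logSumExp θ (P y) (fun y' =>
      Teps (η * (1 - γ * ρ₁)) (μ y' y) / (1 - γ * ρ₁) +
        ((1 - π) * WbarA y' + π * Wbar y' zeroDebt zeroDebt)))
    {WR : Y → ℝ → B → B → ℝ} {WA : Y → ℝ → ℝ} {W : Y → ℝ → B → B → ℝ}
    (hWR : ∀ y z Bb b, WR y z Bb b = endowmentValue γ ρ₀ ρ₁ z + WbarR y Bb b)
    (hWA : ∀ y z, WA y z = endowmentValue γ ρ₀ ρ₁ z + WbarA y)
    (hW : ∀ y' z' B' b',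
      W y' z' B' b' = δ y' B' * WR y' z' B' b' + (1 - δ y' B') * WA y' z') :
    (∀ y z Bb b, WR y z Bb b = ⨆ b',
      (z + G y (Γ y Bb) b b' - θ * γ * logSumExp θ (P y) (fun y' =>
        Th η (μ y' y) (fun x => W y' (ρ₀ + ρ₁ * z + x) (Γ y Bb) b')))) ∧
    (∀ y z, WA y z = z - θ * γ * logSumExp θ (P y) (fun y' =>
      Th η (μ y' y) (fun x => (1 - π) * WA y' (ρ₀ + ρ₁ * z + x) +
        π * W y' (ρ₀ + ρ₁ * z + x) zeroDebt zeroDebt))) ∧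
    (∀ y z Bb b b₀,
      (∀ b', G y (Γ y Bb) b b' - θ * γ * logSumExp θ (P y) (fun y' =>
            Teps (η * (1 - γ * ρ₁)) (μ y' y) / (1 - γ * ρ₁) + Wbar y' (Γ y Bb) b') ≤
          G y (Γ y Bb) b b₀ - θ * γ * logSumExp θ (P y) (fun y' =>
            Teps (η * (1 - γ * ρ₁)) (μ y' y) / (1 - γ * ρ₁) + Wbar y' (Γ y Bb) b₀)) ↔
      (∀ b', z + G y (Γ y Bb) b b' - θ * γ * logSumExp θ (P y) (fun y' =>
            Th η (μ y' y) (fun x => W y' (ρ₀ + ρ₁ * z + x) (Γ y Bb) b')) ≤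
          z + G y (Γ y Bb) b b₀ - θ * γ * logSumExp θ (P y) (fun y' =>
            Th η (μ y' y) (fun x => W y' (ρ₀ + ρ₁ * z + x) (Γ y Bb) b₀)))) := by
  have hW_eq (y' : Y) (z' : ℝ) (B' b' : B) :
      W y' z' B' b' = endowmentValue γ ρ₀ ρ₁ z' + Wbar y' B' b' := by
    rw [hW, hWR, hWA, hWbar]
    ring
  have hreentry (y' : Y) (z' : ℝ) :
      (1 - π) * WA y' z' + π * W y' z' zeroDebt zeroDebt =
        endowmentValue γ ρ₀ ρ₁ z' + ((1 - π) * WbarA y' + π * Wbar y' zeroDebt zeroDebt) := by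
    rw [hWA, hW_eq]
    ring
  have hbellman (y : Y) (z : ℝ) (v : Y → ℝ) :=
    sub_logSumExp_Th_endowmentValue (hP y) hθ hη hγ hρ (fun y' => hμ y' y) ρ₀ z v
  have hobjective (y : Y) (z : ℝ) (Bb b b' : B) :
      z + G y (Γ y Bb) b b' - θ * γ * logSumExp θ (P y) (fun y' =>
          Th η (μ y' y) (fun x => W y' (ρ₀ + ρ₁ * z + x) (Γ y Bb) b')) =
        endowmentValue γ ρ₀ ρ₁ z + (G y (Γ y Bb) b b' - θ * γ * logSumExp θ (P y) (fun y' =>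
          Teps (η * (1 - γ * ρ₁)) (μ y' y) / (1 - γ * ρ₁) + Wbar y' (Γ y Bb) b')) := by
    simp only [hW_eq]
    linear_combination hbellman y z fun y' => Wbar y' (Γ y Bb) b'
  have : Nonempty B := ⟨zeroDebt⟩
  refine ⟨fun y z Bb b => ?_, fun y z => ?_, fun y z Bb b b₀ => ?_⟩
  · simp only [hobjective]
    rw [hWR, hRbar, add_ciSup (hbdd y Bb b)]
  · simp only [hreentry]
    rw [hbellman, hWA, hAbar, neg_mul, ← sub_eq_add_neg]
  · simp only [hobjective, add_le_add_iff_left]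

/-- **Affine decomposition of the lenders' value in the stochastic endowment economy.**
With `A₁ = 1/(1−γρ₁)` and `A₀ = γA₁ρ₀/(1−γ)`, if `W̄_R, W̄_A` solve the reduced Bellman
system (with the translated entropic innovation term `T_{η(1−γρ₁)}[ε]/(1−γρ₁)`), then
`W_R(y,z,B,b) = A₀ + A₁z + W̄_R(y,B,b)` and `W_A(y,z) = A₀ + A₁z + W̄_A(y)` solve the
lender's Bellman system with stochastic endowment `z' = ρ₀ + ρ₁z + ε`, with the same
maximizing portfolios `b'` at each state. -/
theorem stmt17 {Y : Type} [Fintype Y] [Nonempty Y]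
    (P : Y → Y → ℝ) (hP0 : ∀ y y', 0 ≤ P y y') (hP1 : ∀ y, ∑ y', P y y' = 1)
    (γ θ η ρ₀ ρ₁ : ℝ) (hγ0 : 0 < γ) (hγ1 : γ < 1) (hθ : 0 < θ) (hη : 0 < η)
    (hρ : γ * ρ₁ < 1)
    (μ : Y → Y → Measure ℝ) [∀ y' y, IsProbabilityMeasure (μ y' y)]
    (hμint : ∀ (y' y : Y) (κ : ℝ), 0 < κ →
      Integrable (fun x => Real.exp (-x / κ)) (μ y' y))
    (Bset : Finset ℝ) (hB0 : (0 : ℝ) ∈ Bset)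
    (q : Y → ↥Bset → ℝ) (Cq : ℝ) (hq : ∀ y Bb, |q y Bb| ≤ Cq)
    (lam ψ : ℝ) (hlam0 : 0 < lam) (hlam1 : lam ≤ 1) (hψ : 0 ≤ ψ)
    (Γ : Y → ↥Bset → ↥Bset) (δ : Y → ↥Bset → ℝ) (hδ : ∀ y Bb, δ y Bb = 0 ∨ δ y Bb = 1)
    (π : ℝ) (hπ0 : 0 ≤ π) (hπ1 : π ≤ 1)
    (A₀ A₁ : ℝ) (hA₁ : A₁ = 1 / (1 - γ * ρ₁)) (hA₀ : A₀ = γ * A₁ * ρ₀ / (1 - γ))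
    (WbarR : Y → ↥Bset → ↥Bset → ℝ) (WbarA : Y → ℝ)
    (Wbar : Y → ↥Bset → ↥Bset → ℝ)
    (hWbar : ∀ y' B' b',
      Wbar y' B' b' = δ y' B' * WbarR y' B' b' + (1 - δ y' B') * WbarA y')
    (hRbar : ∀ (y : Y) (Bb b : ↥Bset),
      WbarR y Bb b = ⨆ b' : ↥Bset,
        (Gpay (q y (Γ y Bb)) lam ψ (b : ℝ) (b' : ℝ) -
          θ * γ * Real.log (∑ y', P y y' *
            Real.exp (-(Teps (η * (1 - γ * ρ₁)) (μ y' y) / (1 - γ * ρ₁) +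
              Wbar y' (Γ y Bb) b') / θ))))
    (hAbar : ∀ y : Y,
      WbarA y = -(θ * γ) * Real.log (∑ y', P y y' *
        Real.exp (-(Teps (η * (1 - γ * ρ₁)) (μ y' y) / (1 - γ * ρ₁) +
          ((1 - π) * WbarA y' + π * Wbar y' ⟨0, hB0⟩ ⟨0, hB0⟩)) / θ)))
    (WR : Y → ℝ → ↥Bset → ↥Bset → ℝ) (WA : Y → ℝ → ℝ)
    (hWR : ∀ y z Bb b, WR y z Bb b = A₀ + A₁ * z + WbarR y Bb b)
    (hWA : ∀ y z, WA y z = A₀ + A₁ * z + WbarA y)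
    (W : Y → ℝ → ↥Bset → ↥Bset → ℝ)
    (hW : ∀ y' z' B' b',
      W y' z' B' b' = δ y' B' * WR y' z' B' b' + (1 - δ y' B') * WA y' z') :
    (∀ (y : Y) (z : ℝ) (Bb b : ↥Bset),
      WR y z Bb b = ⨆ b' : ↥Bset,
        (z + Gpay (q y (Γ y Bb)) lam ψ (b : ℝ) (b' : ℝ) -
          θ * γ * Real.log (∑ y', P y y' *
            Real.exp (-(Th η (μ y' y)
              (fun x => W y' (ρ₀ + ρ₁ * z + x) (Γ y Bb) b')) / θ)))) ∧
    (∀ (y : Y) (z : ℝ),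
      WA y z = z - θ * γ * Real.log (∑ y', P y y' *
        Real.exp (-(Th η (μ y' y)
          (fun x => (1 - π) * WA y' (ρ₀ + ρ₁ * z + x) +
            π * W y' (ρ₀ + ρ₁ * z + x) ⟨0, hB0⟩ ⟨0, hB0⟩)) / θ))) ∧
    (∀ (y : Y) (z : ℝ) (Bb b b₀ : ↥Bset),
      (∀ b' : ↥Bset,
        Gpay (q y (Γ y Bb)) lam ψ (b : ℝ) (b' : ℝ) -
            θ * γ * Real.log (∑ y', P y y' *
              Real.exp (-(Teps (η * (1 - γ * ρ₁)) (μ y' y) / (1 - γ * ρ₁) +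
                Wbar y' (Γ y Bb) b') / θ))
          ≤ Gpay (q y (Γ y Bb)) lam ψ (b : ℝ) (b₀ : ℝ) -
            θ * γ * Real.log (∑ y', P y y' *
              Real.exp (-(Teps (η * (1 - γ * ρ₁)) (μ y' y) / (1 - γ * ρ₁) +
                Wbar y' (Γ y Bb) b₀) / θ))) ↔
      (∀ b' : ↥Bset,
        z + Gpay (q y (Γ y Bb)) lam ψ (b : ℝ) (b' : ℝ) -
            θ * γ * Real.log (∑ y', P y y' *
              Real.exp (-(Th η (μ y' y)
                (fun x => W y' (ρ₀ + ρ₁ * z + x) (Γ y Bb) b')) / θ))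
          ≤ z + Gpay (q y (Γ y Bb)) lam ψ (b : ℝ) (b₀ : ℝ) -
            θ * γ * Real.log (∑ y', P y y' *
              Real.exp (-(Th η (μ y' y)
                (fun x => W y' (ρ₀ + ρ₁ * z + x) (Γ y Bb) b₀)) / θ)))) := by
  subst hA₁ hA₀
  exact stmt17_general (fun y => (Fintype.sum_pos_iff_of_nonneg (hP0 y)).1 (hP1 y ▸ one_pos))
    hγ1.ne hθ.ne' hη.ne' hρ.ne (fun y' y => hμint y' y _ (mul_pos hη (sub_pos.2 hρ)))
    (fun y B' b b' => Gpay (q y B') lam ψ b b') ⟨0, hB0⟩ Γ δ π hWbar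
    (fun _ _ _ => (Set.finite_range _).bddAbove) hRbar hAbar hWR hWA hW
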